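/- arXiv:math/0703199 — 2 statements merged into one kernel-verified Lean document; each statement's English description precedes it below -/
import Mathlib

section
/- In a Coxeter system (W,S), if two reduced expressions represent the same element, then they are related by a finite sequence of braid moves (replacing an alternating subword sts... of length m(s,t) by tst... of length m(s,t)). (Tits' solution to the word problem, the form used for minimal galleries.) -/
/-- A single braid move on words in the generators: replace a consecutive alternating
subword `sts⋯` of length `m(s,t) < ∞` by `tst⋯` of the same length. -/
def BraidMoveRel {B : Type*} (M : CoxeterMatrix B) (ω ω' : List B) : Prop :=
  ∃ (l₁ l₂ : List B) (i j : B), M i j ≠ 0 ∧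
    ω = l₁ ++ CoxeterSystem.alternatingWord i j (M i j) ++ l₂ ∧
    ω' = l₁ ++ CoxeterSystem.alternatingWord j i (M j i) ++ l₂

/-!
A homomorphism from `W` to permutations of `W × ZMod 2` computes the parity of the number of
occurrences of `t` in the right inversion sequence of a word as a function of the product of the
word only; this gives the strong exchange property. A complex reflection representation, in which
`s i * s j` has an eigenvalue of multiplicative order exactly `M i j`, shows that the relations do
not collapse: `s i * s j` has order `M i j`.

If `i` and `j` are right descents of `w`, these two facts allow an alternating suffix of a reduced
word of `w` to be extended letter by letter up to length `M i j`. So `w` has a reduced word ending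
in `i` and one ending in `j` that differ by a single braid move. An induction on length, applied
before and after this move, joins any reduced word of `w` ending in `i` to any one ending in `j`.
-/

namespace TitsBraid

open CoxeterSystem Module

section Reflections

theorem pow_apply_of_apply_eq_smul {R V : Type*} [Semiring R] [AddCommMonoid V] [Module R V]
    {T : End R V} {v : V} {c : R} (h : T v = c • v) (n : ℕ) :
    (T ^ n) v = c ^ n • v := by
  induction n with
  | zero => simp
  | succ n ih => rw [pow_succ, End.mul_apply, h, map_smul, ih, smul_smul, pow_succ']

theorem geom_sum_apply_eq_zero {R V : Type*} [CommRing R] [IsDomain R] [AddCommGroup V] [Module R V]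
    {T : End R V} {v : V} {ζ : R} {m : ℕ} (hζ : IsPrimitiveRoot ζ m) (hm : 1 < m)
    (h : T v = ζ • v) : (∑ k ∈ Finset.range m, T ^ k) v = 0 := by
  simp_rw [LinearMap.sum_apply, pow_apply_of_apply_eq_smul h, ← Finset.sum_smul,
    hζ.geom_sum_eq_zero hm, zero_smul]

variable {K V : Type*} [Field K] [AddCommGroup V] [Module K V] {x y : V} {f g : Dual K V} {η : K}

theorem preReflection_mul_preReflection_apply_smul_add (hη : η ≠ 0) (hx : f x = 2) (hy : g y = 2)
    (hxy : f y = -(η + η⁻¹)) (hyx : g x = -(η + η⁻¹)) :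
    (preReflection x f * preReflection y g) (η • x + y) = η ^ 2 • (η • x + y) := by
  simp only [End.mul_apply, preReflection_apply, map_add, map_sub, map_smul, hx, hy, hxy, hyx]
  match_scalars <;> field_simp <;> ring

theorem preReflection_mul_preReflection_pow_eq_one {m : ℕ} (hη : η ≠ 0)
    (hζ : IsPrimitiveRoot (η ^ 2) m) (hm : 1 < m) (hx : f x = 2) (hy : g y = 2)
    (hxy : f y = -(η + η⁻¹)) (hyx : g x = -(η + η⁻¹)) :
    (preReflection x f * preReflection y g) ^ m = 1 := by
  set T := preReflection x f * preReflection y g with hT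
  set N := ∑ k ∈ Finset.range m, T ^ k
  have hNη : N (η • x + y) = 0 :=
    geom_sum_apply_eq_zero hζ hm
      (preReflection_mul_preReflection_apply_smul_add hη hx hy hxy hyx)
  have hNη' : N (η⁻¹ • x + y) = 0 := by
    refine geom_sum_apply_eq_zero (ζ := η⁻¹ ^ 2) (by simpa using hζ.inv) hm ?_
    apply preReflection_mul_preReflection_apply_smul_add (inv_ne_zero hη) hx hy <;>
      rwa [inv_inv, add_comm]
  have hNx : N x = 0 := by
    have hηη : η - η⁻¹ ≠ 0 := fun h ↦ hζ.ne_one hm <| by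
      rw [sq]
      nth_rw 2 [sub_eq_zero.mp h]
      exact mul_inv_cancel₀ hη
    refine (smul_eq_zero.mp ?_).resolve_left hηη
    rw [map_add, map_smul] at hNη hNη'
    rw [sub_smul, ← add_sub_add_right_eq_sub _ _ (N y), hNη, hNη', sub_zero]
  have hNy : N y = 0 := by simpa [hNx] using hNη
  have hTsub (z : V) : (T - 1) z = -(g z) • y - (f z - g z * f y) • x := by
    simp only [hT, LinearMap.sub_apply, End.mul_apply, End.one_apply, preReflection_apply, map_sub,
      map_smul]
    module
  rw [← sub_eq_zero, ← geom_sum_mul]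
  ext z
  rw [End.mul_apply, hTsub, map_sub, map_smul, map_smul, hNx, hNy]
  simp

end Reflections

section ReflectionRepresentation

variable {B W : Type*} [Group W] {M : CoxeterMatrix B}

/-- A complex number whose square is a primitive `m`-th root of unity. For `m = 0`, which encodes
`m = ∞`, its square has infinite order. -/
noncomputable def sqrtPrimitiveRoot (m : ℕ) : ℂ :=
  if m = 0 then 2 else Complex.exp (Real.pi * Complex.I / m)

theorem sqrtPrimitiveRoot_ne_zero (m : ℕ) : sqrtPrimitiveRoot m ≠ 0 := by
  unfold sqrtPrimitiveRoot
  split_ifs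
  exacts [two_ne_zero, Complex.exp_ne_zero _]

theorem isPrimitiveRoot_sqrtPrimitiveRoot_sq (m : ℕ) :
    IsPrimitiveRoot (sqrtPrimitiveRoot m ^ 2) m := by
  unfold sqrtPrimitiveRoot
  split_ifs with hm
  · subst hm
    refine ⟨pow_zero _, fun l hl ↦ ?_⟩
    rw [← pow_mul] at hl
    have hl' : 2 ^ (2 * l) = 1 := by exact_mod_cast hl
    simpa using hl'
  · convert Complex.isPrimitiveRoot_exp m hm using 1
    rw [← Complex.exp_nat_mul]
    congr 1
    push_cast
    ring

variable (M) in
/-- The entry `-2 cos (π / M i j)` of the Cartan matrix of `M`, written as `-(η + η⁻¹)` with `η ^ 2`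
of multiplicative order `M i j`. When `M i j = 0` it is not the customary `-2` but `-(2 + 2⁻¹)`,
so that the eigenvalue argument for the order of `s i * s j` covers this case as well. -/
noncomputable def cartanEntry (i j : B) : ℂ :=
  -(sqrtPrimitiveRoot (M i j) + (sqrtPrimitiveRoot (M i j))⁻¹)

theorem cartanEntry_comm (i j : B) : cartanEntry M i j = cartanEntry M j i := by
  rw [cartanEntry, cartanEntry, M.symmetric]

theorem cartanEntry_self (i : B) : cartanEntry M i i = 2 := by
  norm_num [cartanEntry, sqrtPrimitiveRoot]

variable (M) in
/-- The linear form `α_i^∨` on the free vector space on `B` with `α_i^∨(α_j) = cartanEntry M i j`,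
where `α_j` is the basis vector at `j`. -/
noncomputable def simpleCoroot (i : B) : Dual ℂ (B →₀ ℂ) :=
  Finsupp.linearCombination ℂ (cartanEntry M i)

theorem simpleCoroot_single (i j : B) :
    simpleCoroot M i (Finsupp.single j 1) = cartanEntry M i j := by
  simp [simpleCoroot]

theorem simpleCoroot_single_self (i : B) : simpleCoroot M i (Finsupp.single i 1) = 2 := by
  rw [simpleCoroot_single, cartanEntry_self]

variable (M) in
/-- The action of the generator `i` in the reflection representation of the Coxeter group. -/
noncomputable def simpleReflection (i : B) : End ℂ (B →₀ ℂ) :=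
  preReflection (Finsupp.single i 1) (simpleCoroot M i)

theorem isLiftable_simpleReflection : M.IsLiftable (simpleReflection M) := by
  intro i j
  rcases eq_or_ne i j with rfl | hij
  · rw [M.diagonal, pow_one]
    refine LinearMap.ext fun z ↦ ?_
    rw [End.mul_apply]
    exact involutive_preReflection (simpleCoroot_single_self i) z
  rcases Nat.eq_zero_or_pos (M i j) with h0 | hpos
  · rw [h0, pow_zero]
  · have hM : 1 < M i j := by have := M.off_diagonal i j hij; omega
    exact preReflection_mul_preReflection_pow_eq_one (sqrtPrimitiveRoot_ne_zero _)
      (isPrimitiveRoot_sqrtPrimitiveRoot_sq _) hM (simpleCoroot_single_self i)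
      (simpleCoroot_single_self j) (simpleCoroot_single i j)
      ((simpleCoroot_single j i).trans (cartanEntry_comm j i))

theorem orderOf_simple_mul_simple (cs : CoxeterSystem M W) (i j : B) :
    orderOf (cs.simple i * cs.simple j) = M i j := by
  refine Nat.dvd_antisymm (orderOf_dvd_of_pow_eq_one (cs.simple_mul_simple_pow i j)) ?_
  rcases eq_or_ne i j with rfl | hij
  · simp
  set k := orderOf (cs.simple i * cs.simple j)
  set η := sqrtPrimitiveRoot (M i j)
  set v : B →₀ ℂ := η • Finsupp.single i 1 + Finsupp.single j 1
  have hpow : (simpleReflection M i * simpleReflection M j) ^ k = 1 := by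
    rw [← cs.lift_apply_simple isLiftable_simpleReflection i,
      ← cs.lift_apply_simple isLiftable_simpleReflection j, ← map_mul, ← map_pow,
      pow_orderOf_eq_one, map_one]
  have heigen : (simpleReflection M i * simpleReflection M j) v = η ^ 2 • v :=
    preReflection_mul_preReflection_apply_smul_add (sqrtPrimitiveRoot_ne_zero _)
      (simpleCoroot_single_self i) (simpleCoroot_single_self j) (simpleCoroot_single i j)
      ((simpleCoroot_single j i).trans (cartanEntry_comm j i))
  have hfix : v = (η ^ 2) ^ k • v := by
    rw [← pow_apply_of_apply_eq_smul heigen, hpow, End.one_apply]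
  apply (isPrimitiveRoot_sqrtPrimitiveRoot_sq (M i j)).dvd_of_pow_eq_one
  simpa [v, hij.symm, hij] using (DFunLike.congr_fun hfix j).symm

end ReflectionRepresentation

section SignedConjugation

variable {B W : Type*} [Group W] {M : CoxeterMatrix B} (cs : CoxeterSystem M W)

theorem prod_map_alternatingWord_two_mul {G : Type*} [Monoid G] (f : B → G) (i j : B) (n : ℕ) :
    ((alternatingWord i j (2 * n)).map f).prod = (f i * f j) ^ n := by
  induction n with
  | zero => simp [alternatingWord]
  | succ n ih => simp [Nat.mul_succ, alternatingWord_succ, ih, pow_succ]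

theorem lift_wordProd {G : Type*} [Monoid G] {f : B → G} (hf : M.IsLiftable f) (ω : List B) :
    cs.lift ⟨f, hf⟩ (cs.wordProd ω) = (ω.map f).prod := by
  simp [wordProd, map_list_prod, Function.comp_def]

theorem rightInvSeq_append (u v : List B) :
    cs.rightInvSeq (u ++ v) =
      (cs.rightInvSeq u).map (MulAut.conj (cs.wordProd v)⁻¹) ++ cs.rightInvSeq v := by
  induction u with
  | nil => simp
  | cons i u ih => simp [rightInvSeq, ih, wordProd_append, mul_assoc]

theorem rightInvSeq_alternatingWord (i j : B) (n : ℕ) :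
    cs.rightInvSeq (alternatingWord i j n) =
      (List.range n).reverse.map fun p ↦ (cs.simple j * cs.simple i) ^ p * cs.simple j := by
  induction n generalizing i j with
  | zero => simp [alternatingWord]
  | succ n ih =>
    have hconj (p : ℕ) : MulAut.conj (cs.simple j) ((cs.simple i * cs.simple j) ^ p * cs.simple i) =
        (cs.simple j * cs.simple i) ^ (p + 1) * cs.simple j := by
      simp only [MulAut.conj_apply, inv_simple, mul_pow_mul, pow_succ', mul_assoc]
    rw [alternatingWord_succ, rightInvSeq_concat, ih, List.range_succ_eq_map]
    simp [← List.map_reverse, Function.comp_def, hconj]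

variable [DecidableEq W]

/-- The permutation `(t, ε) ↦ (s i * t * s i, ε + [t = s i])` of `W × ZMod 2`. It is a signed form
of conjugation by `s i` on reflections, as in the action of `W` on its roots: the sign changes
exactly at `s i` itself. -/
def signedConj (i : B) : Function.End (W × ZMod 2) :=
  fun p ↦ (cs.simple i * p.1 * cs.simple i, p.2 + if p.1 = cs.simple i then 1 else 0)

theorem prod_map_signedConj_apply (ω : List B) (t : W) (ε : ZMod 2) :
    (ω.map (signedConj cs)).prod (t, ε) =
      (cs.wordProd ω * t * (cs.wordProd ω)⁻¹, ε + ((cs.rightInvSeq ω).count t : ZMod 2)) := by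
  induction ω with
  | nil => simp [Function.End.one_def]
  | cons i ω ih =>
    have hconj : cs.wordProd ω * t * (cs.wordProd ω)⁻¹ = cs.simple i ↔
        (cs.wordProd ω)⁻¹ * cs.simple i * cs.wordProd ω = t := by
      rw [mul_inv_eq_iff_eq_mul, mul_assoc, inv_mul_eq_iff_eq_mul, eq_comm]
    rw [List.map_cons, List.prod_cons]
    change signedConj cs i ((ω.map (signedConj cs)).prod (t, ε)) = _
    rw [ih]
    simp only [signedConj, hconj, rightInvSeq, List.count_cons, beq_iff_eq]
    simp [wordProd_cons, mul_assoc, add_assoc]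

theorem even_count_rightInvSeq_alternatingWord (i j : B) (t : W) :
    Even ((cs.rightInvSeq (alternatingWord i j (2 * M i j))).count t) := by
  have hperiodic : (fun p ↦ (cs.simple j * cs.simple i) ^ (M i j + p) * cs.simple j) =
      fun p ↦ (cs.simple j * cs.simple i) ^ p * cs.simple j := by
    simp [pow_add]
  rw [rightInvSeq_alternatingWord, two_mul, List.range_add, List.reverse_append, List.map_append,
    List.count_append, ← List.map_reverse, List.map_map, Function.comp_def, hperiodic]
  exact Even.add_self _

theorem isLiftable_signedConj : M.IsLiftable (signedConj cs) := by
  intro i j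
  rw [← prod_map_alternatingWord_two_mul]
  funext ⟨t, ε⟩
  have hprod : cs.wordProd (alternatingWord i j (2 * M i j)) = 1 := by
    rw [wordProd, prod_map_alternatingWord_two_mul, cs.simple_mul_simple_pow]
  rw [prod_map_signedConj_apply, hprod,
    (ZMod.natCast_eq_zero_iff_even).mpr (even_count_rightInvSeq_alternatingWord cs i j t)]
  simp [Function.End.one_def]

/-- The action of `W` on `W × ZMod 2` whose sign component computes, for every word `ω`, the parity
of the multiplicity of `t` in the right inversion sequence of `ω`. -/
def signedConjHom : W →* Function.End (W × ZMod 2) :=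
  cs.lift ⟨signedConj cs, isLiftable_signedConj cs⟩

theorem signedConjHom_wordProd_apply (ω : List B) (t : W) (ε : ZMod 2) :
    signedConjHom cs (cs.wordProd ω) (t, ε) =
      (cs.wordProd ω * t * (cs.wordProd ω)⁻¹, ε + ((cs.rightInvSeq ω).count t : ZMod 2)) := by
  rw [signedConjHom, lift_wordProd, prod_map_signedConj_apply]

theorem signedConjHom_mul_apply (w w' : W) (p : W × ZMod 2) :
    signedConjHom cs (w * w') p = signedConjHom cs w (signedConjHom cs w' p) :=
  congrFun (map_mul (signedConjHom cs) w w') p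

theorem signedConjHom_isReflection_apply_self {t : W} (ht : cs.IsReflection t) (ε : ZMod 2) :
    signedConjHom cs t (t, ε) = (t, ε + 1) := by
  obtain ⟨v, i, rfl⟩ := ht
  obtain ⟨ω, rfl⟩ := cs.wordProd_surjective v
  set n := ((cs.rightInvSeq ω).count (cs.simple i) : ZMod 2)
  set t := cs.wordProd ω * cs.simple i * (cs.wordProd ω)⁻¹
  have hω (δ : ZMod 2) :
      signedConjHom cs (cs.wordProd ω) (cs.simple i, δ) = (t, δ + n) :=
    signedConjHom_wordProd_apply cs ω _ _
  have hi (δ : ZMod 2) :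
      signedConjHom cs (cs.simple i) (cs.simple i, δ) = (cs.simple i, δ + 1) := by
    simpa using signedConjHom_wordProd_apply cs [i] (cs.simple i) δ
  calc signedConjHom cs t (t, ε)
      = signedConjHom cs t (signedConjHom cs (cs.wordProd ω) (cs.simple i, ε - n)) := by
        rw [hω, sub_add_cancel]
    _ = signedConjHom cs (cs.wordProd ω)
          (signedConjHom cs (cs.simple i) (cs.simple i, ε - n)) := by
        rw [← signedConjHom_mul_apply, ← signedConjHom_mul_apply, inv_mul_cancel_right]
    _ = (t, ε + 1) := by
        rw [hi, hω, add_right_comm, sub_add_cancel]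

end SignedConjugation

section Exchange

variable {B W : Type*} [Group W] {M : CoxeterMatrix B} (cs : CoxeterSystem M W)

theorem mem_rightInvSeq_of_isRightInversion {ω : List B} {t : W}
    (ht : cs.IsRightInversion (cs.wordProd ω) t) : t ∈ cs.rightInvSeq ω := by
  classical
  by_contra hmem
  obtain ⟨u, hu, hwu⟩ := cs.exists_isReduced (cs.wordProd ω * t)
  have hcount : ((cs.rightInvSeq u).count t : ZMod 2) = 1 := by
    have h := signedConjHom_mul_apply cs (cs.wordProd ω) t (t, 0)
    rw [hwu, signedConjHom_isReflection_apply_self cs ht.1, signedConjHom_wordProd_apply,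
      signedConjHom_wordProd_apply, List.count_eq_zero_of_not_mem hmem] at h
    simpa using congrArg Prod.snd h
  have hmem_u : t ∈ cs.rightInvSeq u := by
    by_contra hn
    simp [List.count_eq_zero_of_not_mem hn] at hcount
  have hlt := (cs.isRightInversion_of_mem_rightInvSeq hu hmem_u).2
  rw [← hwu, mul_assoc, ht.1.mul_self, mul_one] at hlt
  exact lt_asymm hlt ht.2

theorem exists_eraseIdx_of_mem_rightInvSeq {ω : List B} {t : W} (ht : t ∈ cs.rightInvSeq ω) :
    ∃ n < ω.length, cs.wordProd ω * t = cs.wordProd (ω.eraseIdx n) := by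
  obtain ⟨n, hn, rfl⟩ := List.mem_iff_getElem.mp ht
  refine ⟨n, by simpa using hn, ?_⟩
  rw [← wordProd_mul_getD_rightInvSeq, List.getD_eq_getElem _ 1 hn]

theorem exists_isReduced_append_concat {u v : List B} {j : B} (huv : cs.IsReduced (u ++ v))
    (hj : cs.IsRightDescent (cs.wordProd (u ++ v)) j) (hv : cs.simple j ∉ cs.rightInvSeq v) :
    ∃ u', cs.IsReduced (u' ++ v.concat j) ∧
      cs.wordProd (u' ++ v.concat j) = cs.wordProd (u ++ v) := by
  have hmem := mem_rightInvSeq_of_isRightInversion cs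
    ((cs.isRightInversion_simple_iff_isRightDescent _ j).mpr hj)
  rw [rightInvSeq_append, List.mem_append, or_iff_left hv] at hmem
  obtain ⟨t, ht, htj⟩ := List.mem_map.mp hmem
  obtain ⟨n, hn, herase⟩ := exists_eraseIdx_of_mem_rightInvSeq cs ht
  have hmove : cs.wordProd v * cs.simple j = t * cs.wordProd v := by
    simp [← htj, mul_assoc]
  have hprod : cs.wordProd (u.eraseIdx n ++ v.concat j) = cs.wordProd (u ++ v) := by
    rw [wordProd_append, wordProd_concat, ← herase, hmove, wordProd_append, mul_assoc,
      ← mul_assoc t, (cs.isReflection_of_mem_rightInvSeq u ht).mul_self, one_mul]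
  refine ⟨u.eraseIdx n, ?_, hprod⟩
  rw [CoxeterSystem.IsReduced, hprod, huv.eq]
  simp only [List.length_append, List.length_concat, ← List.length_eraseIdx_add_one hn]
  omega

theorem simple_notMem_rightInvSeq_alternatingWord {i j : B} {k : ℕ} (hk : M i j = 0 ∨ k < M i j) :
    cs.simple j ∉ cs.rightInvSeq (alternatingWord j i k) := by
  rw [rightInvSeq_alternatingWord]
  intro hmem
  obtain ⟨p, hp, hpj⟩ := List.mem_map.mp hmem
  have hpk : p < k := by simpa using hp
  have hdvd : M i j ∣ p + 1 := by
    rw [← orderOf_simple_mul_simple cs]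
    apply orderOf_dvd_of_pow_eq_one
    rw [pow_succ, ← mul_assoc, hpj, simple_mul_simple_self]
  rcases hk with h0 | hlt
  · simp [h0] at hdvd
  · have := Nat.le_of_dvd p.succ_pos hdvd
    omega

theorem exists_isReduced_append_alternatingWord {w : W} {i j : B} (hi : cs.IsRightDescent w i)
    (hj : cs.IsRightDescent w j) {k : ℕ} (hk : M i j = 0 ∨ k ≤ M i j) :
    ∃ u, cs.IsReduced (u ++ alternatingWord i j k) ∧
      cs.wordProd (u ++ alternatingWord i j k) = w := by
  induction k generalizing i j with
  | zero =>
    obtain ⟨u, hu, rfl⟩ := cs.exists_isReduced w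
    exact ⟨u, by simpa [alternatingWord] using hu, by simp [alternatingWord]⟩
  | succ k ih =>
    obtain ⟨u, hu, rfl⟩ := ih hj hi (by rw [M.symmetric]; omega)
    exact exists_isReduced_append_concat cs hu hj
      (simple_notMem_rightInvSeq_alternatingWord cs (by omega))

theorem matrix_ne_zero_of_isRightDescent {w : W} {i j : B} (hi : cs.IsRightDescent w i)
    (hj : cs.IsRightDescent w j) : M i j ≠ 0 := by
  intro h0
  obtain ⟨u, hu, hw⟩ :=
    exists_isReduced_append_alternatingWord cs hi hj (k := cs.length w + 1) (Or.inl h0)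
  have hlen := hu.eq
  rw [hw, List.length_append, length_alternatingWord] at hlen
  omega

end Exchange

section BraidMoves

variable {B W : Type*} [Group W] {M : CoxeterMatrix B} {cs : CoxeterSystem M W}

theorem reflTransGen_braidMoveRel_append_right {ω ω' : List B} (v : List B)
    (h : Relation.ReflTransGen (BraidMoveRel M) ω ω') :
    Relation.ReflTransGen (BraidMoveRel M) (ω ++ v) (ω' ++ v) := by
  refine Relation.ReflTransGen.lift (· ++ v) ?_ _ _ h
  rintro _ _ ⟨l₁, l₂, i, j, hij, rfl, rfl⟩
  exact ⟨l₁, l₂ ++ v, i, j, hij, by simp, by simp⟩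

theorem isReduced_of_append_left {u v : List B} (h : cs.IsReduced (u ++ v)) : cs.IsReduced u := by
  simpa using h.take u.length

theorem isRightDescent_of_isReduced_concat {u : List B} {i : B} (h : cs.IsReduced (u ++ [i])) :
    cs.IsRightDescent (cs.wordProd (u ++ [i])) i := by
  rw [IsRightDescent, h.eq, wordProd_append, wordProd_singleton, simple_mul_simple_cancel_right,
    (isReduced_of_append_left h).eq]
  simp

theorem exists_alternatingWord_eq_concat (i j : B) {m : ℕ} (hm : m ≠ 0) :
    ∃ v, alternatingWord i j m = v ++ [j] := by
  obtain ⟨n, rfl⟩ := Nat.exists_eq_succ_of_ne_zero hm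
  exact ⟨alternatingWord j i n, by rw [alternatingWord_succ, List.concat_eq_append]⟩

theorem exists_braidMoveRel_of_isRightDescent {w : W} {i j : B} (hi : cs.IsRightDescent w i)
    (hj : cs.IsRightDescent w j) :
    ∃ u v, BraidMoveRel M (u ++ [i]) (v ++ [j]) ∧
      cs.IsReduced (u ++ [i]) ∧ cs.wordProd (u ++ [i]) = w ∧
      cs.IsReduced (v ++ [j]) ∧ cs.wordProd (v ++ [j]) = w := by
  have hji := matrix_ne_zero_of_isRightDescent cs hj hi
  have hij := matrix_ne_zero_of_isRightDescent cs hi hj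
  obtain ⟨x, hred, rfl⟩ := exists_isReduced_append_alternatingWord cs hj hi (Or.inr le_rfl)
  have hprod : cs.wordProd (x ++ alternatingWord i j (M i j)) =
      cs.wordProd (x ++ alternatingWord j i (M j i)) := by
    rw [wordProd_append, wordProd_append, wordProd_braidWord_eq]
  have hred' : cs.IsReduced (x ++ alternatingWord i j (M i j)) := by
    rw [CoxeterSystem.IsReduced, hprod, hred.eq]
    simp [M.symmetric i j]
  have hmove : BraidMoveRel M (x ++ alternatingWord j i (M j i))
      (x ++ alternatingWord i j (M i j)) :=
    ⟨x, [], j, i, hji, by simp, by simp⟩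
  obtain ⟨a, ha⟩ := exists_alternatingWord_eq_concat j i hji
  obtain ⟨b, hb⟩ := exists_alternatingWord_eq_concat i j hij
  simp only [ha, hb, ← List.append_assoc] at hmove hred hred' hprod ⊢
  exact ⟨x ++ a, x ++ b, hmove, hred, rfl, hred', hprod⟩

end BraidMoves

end TitsBraid

/-- Tits' solution to the word problem: any two reduced expressions of the same element of a
Coxeter group are related by a finite sequence of braid moves. -/
theorem reduced_words_related_by_braid_moves {B W : Type*} [Group W] {M : CoxeterMatrix B}
    (cs : CoxeterSystem M W) (ω ω' : List B)
    (hω : cs.IsReduced ω) (hω' : cs.IsReduced ω')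
    (h : cs.wordProd ω = cs.wordProd ω') :
    Relation.ReflTransGen (BraidMoveRel M) ω ω' := by
  induction hn : cs.length (cs.wordProd ω) generalizing ω ω' with
  | zero =>
    rw [List.eq_nil_of_length_eq_zero (hω.eq.symm.trans hn),
      List.eq_nil_of_length_eq_zero (hω'.eq.symm.trans (h ▸ hn))]
  | succ n ih =>
    have same_last {u v : List B} {i : B} (hu : cs.IsReduced (u ++ [i]))
        (hv : cs.IsReduced (v ++ [i])) (huv : cs.wordProd (u ++ [i]) = cs.wordProd (v ++ [i]))
        (hn : cs.length (cs.wordProd (u ++ [i])) = n + 1) :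
        Relation.ReflTransGen (BraidMoveRel M) (u ++ [i]) (v ++ [i]) := by
      have hu' := TitsBraid.isReduced_of_append_left hu
      refine TitsBraid.reflTransGen_braidMoveRel_append_right [i] <|
        ih u v hu' (TitsBraid.isReduced_of_append_left hv) ?_ ?_
      · simpa [cs.wordProd_append] using huv
      · simpa [hu.eq, hu'.eq] using hn
    obtain ⟨u, i, rfl⟩ := (List.eq_nil_or_concat' ω).resolve_left (by rintro rfl; simp at hn)
    obtain ⟨v, j, rfl⟩ := (List.eq_nil_or_concat' ω').resolve_left (by rintro rfl; simp [h] at hn)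
    obtain ⟨u', v', hmove, hu', hwu', hv', hwv'⟩ := TitsBraid.exists_braidMoveRel_of_isRightDescent
      (TitsBraid.isRightDescent_of_isReduced_concat hω)
      (h ▸ TitsBraid.isRightDescent_of_isReduced_concat hω')
    exact ((same_last hω hu' hwu'.symm hn).tail hmove).trans
      (same_last hv' hω' (hwv'.trans h) (hwv' ▸ hn))
end

section
/- The asymptotic dimension of any building C of type (W,S) (with the gallery metric) equals the asymptotic dimension of W with the word metric. -/
/-- `AsdimLE ρ n`: the space `X` with distance function `ρ` has asymptotic dimension at most
`n`: for every `d > 0` there are `n + 1` families of subsets whose union is a uniformly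
bounded cover, and within each family distinct sets are `d`-disjoint. -/
def AsdimLE {X : Type*} (ρ : X → X → ℝ) (n : ℕ) : Prop :=
  ∀ d : ℝ, 0 < d → ∃ 𝒰 : Fin (n + 1) → Set (Set X),
    (∃ R : ℝ, ∀ i, ∀ U ∈ 𝒰 i, ∀ x ∈ U, ∀ y ∈ U, ρ x y ≤ R) ∧
    (∀ x : X, ∃ i, ∃ U ∈ 𝒰 i, x ∈ U) ∧
    (∀ i, ∀ U ∈ 𝒰 i, ∀ V ∈ 𝒰 i, U ≠ V → ∀ x ∈ U, ∀ y ∈ V, d ≤ ρ x y)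

/-- The asymptotic dimension of the space `X` with distance function `ρ`,
as an extended natural number (`⊤` if no finite `n` works). -/
noncomputable def asdim {X : Type*} (ρ : X → X → ℝ) : ℕ∞ :=
  sInf {m : ℕ∞ | ∃ n : ℕ, m = (n : ℕ∞) ∧ AsdimLE ρ n}

/-- A building of type `(W, S)` (Abramenko–Brown `W`-metric definition): a set of chambers
`C` with a `W`-valued distance `δC` satisfying the standard building axioms (WD1)–(WD3). -/
structure IsBuilding {B W C : Type*} [Group W] {M : CoxeterMatrix B}
    (cs : CoxeterSystem M W) (δC : C → C → W) : Prop where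
  eq_one_iff : ∀ c d : C, δC c d = 1 ↔ c = d
  wd2 : ∀ (c d d' : C) (i : B), δC d d' = cs.simple i →
    δC c d' = δC c d * cs.simple i ∨ δC c d' = δC c d
  wd2' : ∀ (c d d' : C) (i : B), δC d d' = cs.simple i →
    cs.length (δC c d * cs.simple i) = cs.length (δC c d) + 1 →
    δC c d' = δC c d * cs.simple i
  wd3 : ∀ (c d : C) (i : B), ∃ d' : C, δC d d' = cs.simple i ∧
    δC c d' = δC c d * cs.simple i

/-- A gallery in the building: a sequence of consecutively adjacent chambers. -/
def IsGallery {B W C : Type*} [Group W] {M : CoxeterMatrix B}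
    (cs : CoxeterSystem M W) (δC : C → C → W) (l : List C) : Prop :=
  l.Chain' (fun c d => ∃ i : B, δC c d = cs.simple i)

/-- A minimal gallery from `x` to `y`: a gallery starting at `x`, ending at `y`,
whose length (number of steps) equals `ℓ(δC x y)`. -/
def IsMinGallery {B W C : Type*} [Group W] {M : CoxeterMatrix B}
    (cs : CoxeterSystem M W) (δC : C → C → W) (x y : C) (l : List C) : Prop :=
  IsGallery cs δC l ∧ l.head? = some x ∧ l.getLast? = some y ∧
    l.length = cs.length (δC x y) + 1

/-- A gallery in the Coxeter complex `W`: consecutive elements differ by a simple reflection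
on the right. -/
def IsWGallery {B W : Type*} [Group W] {M : CoxeterMatrix B}
    (cs : CoxeterSystem M W) (l : List W) : Prop :=
  l.Chain' (fun u v => ∃ i : B, v = u * cs.simple i)

/-- A minimal gallery from `u` to `w` in the Coxeter complex `W`. -/
def IsMinWGallery {B W : Type*} [Group W] {M : CoxeterMatrix B}
    (cs : CoxeterSystem M W) (u w : W) (l : List W) : Prop :=
  IsWGallery cs l ∧ l.head? = some u ∧ l.getLast? = some w ∧
    l.length = cs.length (u⁻¹ * w) + 1

/-!
Retract the building `C` onto `W` by `x ↦ δ c₀ x`. This map is 1-Lipschitz, so it pulls a good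
cover of `W` back to `C`; the pulled-back sets are unbounded, but it suffices that their
`d`-components are uniformly bounded. Such a component `Y` lives over a ball `w · B(1, N)`. If the
wall of a simple reflection `s` does not cut the slightly larger ball around `w`, then `c₀` can be
replaced by an `s`-adjacent chamber, which moves the image of `Y` by left multiplication by `s`.
Which of the finitely many walls cutting a ball around `1` separate `1` from `w⁻¹` is a finite
amount of information, and two elements for which it agrees are joined by moves of this kind. So
the image of `Y` can be moved to within a bounded distance of `1`, i.e. `Y` lies within a bounded
distance of a single chamber. Conversely, `W` embeds isometrically in `C` as an apartment.
-/

/-! ### Asymptotic dimension -/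

section AsymptoticDimension

open Relation

variable {X Y : Type*} {ρX : X → X → ℝ} {ρY : Y → Y → ℝ}

lemma asdim_congr (h : ∀ n, AsdimLE ρX n ↔ AsdimLE ρY n) : asdim ρX = asdim ρY := by
  simp only [asdim, h]

lemma AsdimLE.of_isometry {n : ℕ} (h : AsdimLE ρY n) (f : X → Y)
    (hf : ∀ x y, ρY (f x) (f y) = ρX x y) : AsdimLE ρX n := by
  intro d hd
  obtain ⟨𝒰, ⟨R, hR⟩, hcover, hdisjoint⟩ := h d hd
  refine ⟨fun i ↦ (f ⁻¹' ·) '' 𝒰 i, ⟨R, ?_⟩, fun x ↦ ?_, ?_⟩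
  · rintro i _ ⟨U, hU, rfl⟩ x hx y hy
    exact hf x y ▸ hR i U hU _ hx _ hy
  · obtain ⟨i, U, hU, hx⟩ := hcover (f x)
    exact ⟨i, _, ⟨U, hU, rfl⟩, hx⟩
  · rintro i _ ⟨U, hU, rfl⟩ _ ⟨V, hV, rfl⟩ hUV x hx y hy
    exact hf x y ▸ hdisjoint i U hU V hV (fun h ↦ hUV (h ▸ rfl)) _ hx _ hy

/-- The step relation of `d`-chains inside a subset `A` of a space with distance function `ρ`. -/
def CloseIn (ρ : X → X → ℝ) (d : ℝ) (A : Set X) (x y : X) : Prop :=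
  x ∈ A ∧ y ∈ A ∧ ρ x y < d

/-- The `d`-component of `x` in `A`: the set of points reached from `x` by `d`-chains in `A`. If
`x ∉ A`, it is `{x}`. -/
def chainComponent (ρ : X → X → ℝ) (d : ℝ) (A : Set X) (x : X) : Set X :=
  {y | ReflTransGen (CloseIn ρ d A) x y}

lemma chainComponent_subset {d : ℝ} {A : Set X} {x : X} (hx : x ∈ A) :
    chainComponent ρX d A x ⊆ A := by
  intro y hy
  rcases hy.cases_tail with rfl | ⟨_, _, h⟩
  exacts [hx, h.2.1]

lemma chainComponent_eq_of_mem (hsymm : ∀ x y, ρX x y = ρX y x) {d : ℝ} {A : Set X} {x y : X}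
    (hy : y ∈ chainComponent ρX d A x) : chainComponent ρX d A x = chainComponent ρX d A y := by
  have : Std.Symm (CloseIn ρX d A) := ⟨fun a b h ↦ ⟨h.2.1, h.1, hsymm a b ▸ h.2.2⟩⟩
  have hyx : ReflTransGen (CloseIn ρX d A) y x := symm (r := ReflTransGen _) hy
  exact Set.ext fun z ↦ ⟨hyx.trans, fun hz ↦ ReflTransGen.trans hy hz⟩

theorem AsdimLE.of_lipschitz {n : ℕ} (h : AsdimLE ρY n) (f : X → Y)
    (hsymm : ∀ x y, ρX x y = ρX y x) (hf : ∀ x y, ρY (f x) (f y) ≤ ρX x y)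
    (hbdd : ∀ R d : ℝ, ∃ K : ℝ, ∀ U : Set Y, (∀ u ∈ U, ∀ v ∈ U, ρY u v ≤ R) →
      ∀ x ∈ f ⁻¹' U, ∀ y ∈ chainComponent ρX d (f ⁻¹' U) x, ρX x y ≤ K) :
    AsdimLE ρX n := by
  intro d hd
  obtain ⟨𝒰, ⟨R, hR⟩, hcover, hdisjoint⟩ := h d hd
  obtain ⟨K, hK⟩ := hbdd R d
  refine ⟨fun i ↦ {V | ∃ U ∈ 𝒰 i, ∃ x ∈ f ⁻¹' U, V = chainComponent ρX d (f ⁻¹' U) x},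
    ⟨K, ?_⟩, fun x ↦ ?_, ?_⟩
  · rintro i _ ⟨U, hU, z, hz, rfl⟩ x hx y hy
    rw [chainComponent_eq_of_mem hsymm hx] at hy
    exact hK U (hR i U hU) x (chainComponent_subset hz hx) y hy
  · obtain ⟨i, U, hU, hx⟩ := hcover (f x)
    exact ⟨i, _, ⟨U, hU, x, hx, rfl⟩, ReflTransGen.refl⟩
  · rintro i _ ⟨U, hU, z, hz, rfl⟩ _ ⟨U', hU', z', hz', rfl⟩ hne x hx y hy
    have hxU : f x ∈ U := chainComponent_subset hz hx
    have hyU' : f y ∈ U' := chainComponent_subset hz' hy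
    by_contra! hlt
    obtain rfl : U = U' := by
      by_contra hUU'
      exact (hdisjoint i U hU U' hU' hUU' _ hxU _ hyU').not_gt ((hf x y).trans_lt hlt)
    have hyx : y ∈ chainComponent ρX d (f ⁻¹' U) x := ReflTransGen.single ⟨hxU, hyU', hlt⟩
    apply hne
    rw [chainComponent_eq_of_mem hsymm hx, chainComponent_eq_of_mem hsymm hy,
      chainComponent_eq_of_mem hsymm hyx]

end AsymptoticDimension

/-! ### Inversions in Coxeter groups -/

section InversionParity

open CoxeterSystem

variable {B W : Type*} [Group W] {M : CoxeterMatrix B} (cs : CoxeterSystem M W)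

open Classical in
lemma even_count_leftInvSeq_alternatingWord (i j : B) (t : W) :
    Even ((cs.leftInvSeq (alternatingWord i j (2 * M i j))).count t) := by
  have hseq : cs.leftInvSeq (alternatingWord i j (2 * M i j)) =
      (List.range (2 * M i j)).map fun k ↦ cs.wordProd (alternatingWord j i (2 * k + 1)) :=
    List.ext_getElem (by simp) fun k hk _ ↦ by
      rw [cs.getElem_leftInvSeq_alternatingWord i j _ k (by simpa using hk)]
      simp
  have hperiodic (k : ℕ) : cs.wordProd (alternatingWord j i (2 * (M i j + k) + 1)) =
      cs.wordProd (alternatingWord j i (2 * k + 1)) := by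
    have hhalf (m : ℕ) : (2 * m + 1) / 2 = m := by omega
    simp [prod_alternatingWord_eq_mul_pow, hhalf, pow_add]
  rw [hseq, two_mul, List.range_add, List.map_append, List.map_map, List.count_append]
  simp only [Function.comp_def, hperiodic]
  exact Even.add_self _

open Classical in
/-- The simple reflection `s i` acting on signed elements of `W`: it conjugates the element, and
changes the sign exactly when the element is `s i`. Signs are encoded additively, in `ZMod 2`. -/
noncomputable def signedConj (i : B) : Equiv.Perm (W × ZMod 2) :=
  Function.Involutive.toPerm
    (fun p ↦ (cs.simple i * p.1 * cs.simple i, p.2 + if p.1 = cs.simple i then 1 else 0))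
    fun p ↦ by
      by_cases hp : p.1 = cs.simple i <;>
        simp [hp, mul_assoc, mul_eq_one_iff_eq_inv, Prod.ext_iff, add_assoc,
          CharTwo.add_self_eq_zero]

open Classical in
lemma prod_map_signedConj (ω : List B) (t : W) (ε : ZMod 2) :
    (ω.map (signedConj cs)).prod (t, ε) =
      (cs.wordProd ω * t * (cs.wordProd ω)⁻¹, ε + ((cs.rightInvSeq ω).count t : ℕ)) := by
  induction ω with
  | nil => simp
  | cons i ω ih =>
    have hcross : cs.wordProd ω * (t * (cs.wordProd ω)⁻¹) = cs.simple i ↔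
        (cs.wordProd ω)⁻¹ * (cs.simple i * cs.wordProd ω) = t := by
      rw [← mul_assoc, mul_inv_eq_iff_eq_mul, inv_mul_eq_iff_eq_mul, eq_comm]
    rw [List.map_cons, List.prod_cons, Equiv.Perm.mul_apply, ih]
    simp [signedConj, rightInvSeq, wordProd_cons, List.count_cons, hcross, mul_assoc, add_assoc]

lemma prod_map_reverse_alternatingWord {G : Type*} [Monoid G] (f : B → G) (i j : B) (m : ℕ) :
    ((alternatingWord i j (2 * m)).reverse.map f).prod = (f j * f i) ^ m := by
  induction m with
  | zero => simp [alternatingWord]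
  | succ m ih =>
    rw [mul_add_one, alternatingWord_succ, alternatingWord_succ]
    simp only [List.concat_eq_append, List.reverse_append, List.reverse_singleton,
      List.singleton_append, List.map_cons, List.prod_cons, ih, pow_succ', mul_assoc]

lemma isLiftable_signedConj : M.IsLiftable (signedConj cs) := by
  classical
  intro i j
  ext1 ⟨t, ε⟩
  have hw : cs.wordProd (alternatingWord j i (2 * M j i)).reverse = 1 := by
    rw [wordProd, prod_map_reverse_alternatingWord, simple_mul_simple_pow']
  have hcount := (ZMod.natCast_eq_zero_iff_even).2
    (even_count_leftInvSeq_alternatingWord cs j i t)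
  rw [M.symmetric i j, ← prod_map_reverse_alternatingWord, prod_map_signedConj, hw,
    rightInvSeq_reverse, List.count_reverse, hcount]
  simp

/-- The action of `W` on signed elements of `W` that extends `signedConj`. -/
noncomputable def signedConjHom : W →* Equiv.Perm (W × ZMod 2) :=
  cs.lift ⟨signedConj cs, isLiftable_signedConj cs⟩

/-- The number, modulo 2, of times a gallery from `1` to `w⁻¹` crosses the wall of the reflection
`t`; it is `1` if `t` is a right inversion of `w`, and `0` otherwise. -/
noncomputable def inversionParity (w t : W) : ZMod 2 := (signedConjHom cs w (t, 0)).2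

lemma signedConjHom_wordProd (ω : List B) :
    signedConjHom cs (cs.wordProd ω) = (ω.map (signedConj cs)).prod := by
  rw [wordProd, map_list_prod, List.map_map]
  congr 2
  exact funext fun i ↦ cs.lift_apply_simple (isLiftable_signedConj cs) i

open Classical in
lemma inversionParity_wordProd (ω : List B) (t : W) :
    inversionParity cs (cs.wordProd ω) t = ((cs.rightInvSeq ω).count t : ℕ) := by
  rw [inversionParity, signedConjHom_wordProd, prod_map_signedConj, zero_add]

lemma signedConjHom_apply (w t : W) (ε : ZMod 2) :
    signedConjHom cs w (t, ε) = (w * t * w⁻¹, ε + inversionParity cs w t) := by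
  obtain ⟨ω, rfl⟩ := cs.wordProd_surjective w
  rw [signedConjHom_wordProd, prod_map_signedConj, inversionParity_wordProd]

lemma inversionParity_mul (x y t : W) :
    inversionParity cs (x * y) t = inversionParity cs y t + inversionParity cs x (y * t * y⁻¹) := by
  rw [inversionParity, map_mul, Equiv.Perm.mul_apply, signedConjHom_apply,
    signedConjHom_apply, zero_add]

lemma inversionParity_one (t : W) : inversionParity cs 1 t = 0 := by
  simpa using inversionParity_wordProd cs [] t

open Classical in
lemma inversionParity_simple (i : B) (t : W) :
    inversionParity cs (cs.simple i) t = if cs.simple i = t then 1 else 0 := by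
  simpa [List.count_singleton] using inversionParity_wordProd cs [i] t

lemma inversionParity_self {t : W} (ht : cs.IsReflection t) : inversionParity cs t t = 1 := by
  obtain ⟨u, i, rfl⟩ := ht
  set t := u * cs.simple i * u⁻¹ with ht
  have hconj : u⁻¹ * t * u⁻¹⁻¹ = cs.simple i := by rw [ht]; group
  have hcancel : inversionParity cs u⁻¹ t + inversionParity cs u (cs.simple i) = 0 := by
    rw [← hconj, ← inversionParity_mul, mul_inv_cancel, inversionParity_one]
  calc inversionParity cs (u * cs.simple i * u⁻¹) t
      = inversionParity cs u⁻¹ t + (inversionParity cs (cs.simple i) (cs.simple i) +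
          inversionParity cs u (cs.simple i)) := by
        rw [inversionParity_mul, hconj, inversionParity_mul, mul_inv_cancel_right]
    _ = 1 := by
        rw [inversionParity_simple, if_pos rfl, add_left_comm, hcancel, add_zero]

theorem inversionParity_eq_one_iff {w t : W} :
    inversionParity cs w t = 1 ↔ cs.IsRightInversion w t := by
  classical
  have eq_zero_of_ne_one : ∀ a : ZMod 2, a ≠ 1 → a = 0 := by decide
  have isRightInversion_of_eq_one {w : W} (h : inversionParity cs w t = 1) :
      cs.IsRightInversion w t := by
    obtain ⟨ω, hω, rfl⟩ := cs.exists_isReduced w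
    rw [inversionParity_wordProd] at h
    refine cs.isRightInversion_of_mem_rightInvSeq hω (List.count_pos_iff.1 ?_)
    exact Nat.pos_of_ne_zero fun h0 ↦ by simp [h0] at h
  refine ⟨isRightInversion_of_eq_one, fun h ↦ ?_⟩
  by_contra hne
  refine h.1.isRightInversion_mul_left_iff.1 (isRightInversion_of_eq_one ?_) h
  rw [inversionParity_mul, mul_inv_cancel_right, inversionParity_self cs h.1,
    eq_zero_of_ne_one _ hne, add_zero]

end InversionParity

/-! ### Walls and balls in Coxeter groups -/

lemma exists_bounded_representative {α β : Type*} [Finite β] (f : α → β) (size : α → ℕ) :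
    ∃ D, ∀ a, ∃ a', size a' ≤ D ∧ f a' = f a := by
  choose a' ha' using fun b : Set.range f ↦ b.2
  obtain ⟨D, hD⟩ := (Set.finite_range (size ∘ a')).bddAbove
  exact ⟨D, fun a ↦ ⟨a' ⟨f a, a, rfl⟩, hD ⟨_, rfl⟩, ha' _⟩⟩

section WallsAndBalls

open CoxeterSystem Relation

variable {B W : Type*} [Group W] {M : CoxeterMatrix B} (cs : CoxeterSystem M W)

/-- The ball of radius `N` around `w` lies on one side of the wall of the simple reflection `s i`:
a chamber `g` is on the far side of this wall, as seen from `1`, if and only if `i` is a left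
descent of `g`. -/
def BallAvoidsWall (N : ℕ) (w : W) (i : B) : Prop :=
  ∀ g, cs.length (w⁻¹ * g) ≤ N → (cs.IsLeftDescent g i ↔ cs.IsLeftDescent w i)

/-- `w'` is the mirror image of `w` in the wall of a simple reflection which does not cut the ball
of radius `N` around `w`. -/
def FarReflection (N : ℕ) (w w' : W) : Prop :=
  ∃ i, BallAvoidsWall cs N w i ∧ w' = cs.simple i * w

/-- The reflections whose walls cut the ball of radius `N` around `1`. Here `v⁻¹` runs through the
ball, and the walls separating it from `1` are those of the right inversions of `v`. -/
def ballWalls (N : ℕ) : Set W :=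
  {t | ∃ v, cs.length v ≤ N ∧ cs.IsRightInversion v t}

lemma finite_setOf_length_le [Finite B] (N : ℕ) : {w : W | cs.length w ≤ N}.Finite := by
  refine ((List.finite_length_le B N).image cs.wordProd).subset fun w hw ↦ ?_
  obtain ⟨ω, hω, rfl⟩ := cs.exists_isReduced w
  exact ⟨ω, hω.symm.trans_le hw, rfl⟩

lemma finite_ballWalls [Finite B] (N : ℕ) : (ballWalls cs N).Finite := by
  have hball := finite_setOf_length_le cs N
  refine (hball.image2 (fun v u ↦ v⁻¹ * u) hball).subset ?_
  rintro t ⟨v, hv, ht⟩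
  exact ⟨v, hv, v * t, ht.2.le.trans hv, inv_mul_cancel_left v t⟩

lemma isLeftDescent_iff_inversionParity {w : W} {i : B} :
    cs.IsLeftDescent w i ↔ inversionParity cs w⁻¹ (cs.simple i) = 1 := by
  rw [inversionParity_eq_one_iff, isRightInversion_inv_iff,
    isLeftInversion_simple_iff_isLeftDescent]

lemma ballAvoidsWall_of_notMem_ballWalls {N : ℕ} {w : W} {i : B}
    (h : w⁻¹ * cs.simple i * w ∉ ballWalls cs N) : BallAvoidsWall cs N w i := by
  intro g hg
  have hparity : inversionParity cs (g⁻¹ * w) (w⁻¹ * cs.simple i * w) = 0 := by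
    have : ∀ a : ZMod 2, a ≠ 1 → a = 0 := by decide
    refine this _ fun hone ↦ h ⟨g⁻¹ * w, ?_, (inversionParity_eq_one_iff cs).1 hone⟩
    rwa [← cs.length_inv, mul_inv_rev, inv_inv]
  have hg : g⁻¹ = g⁻¹ * w * w⁻¹ := (mul_inv_cancel_right _ _).symm
  rw [isLeftDescent_iff_inversionParity, isLeftDescent_iff_inversionParity, hg,
    inversionParity_mul, inv_inv, hparity, add_zero]

lemma reflTransGen_farReflection_mul {N : ℕ} (u w : W)
    (h : ∀ t ∈ ballWalls cs N, inversionParity cs u (w * t * w⁻¹) = 0) :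
    ReflTransGen (FarReflection cs N) w (u * w) := by
  induction hn : cs.length u generalizing u w with
  | zero => rw [cs.length_eq_zero_iff.1 hn, one_mul]
  | succ n ih =>
    obtain ⟨i, hi⟩ := cs.exists_rightDescent_of_ne_one (w := u) (by rintro rfl; simp at hn)
    have hparity : inversionParity cs u (cs.simple i) = 1 := by
      rwa [inversionParity_eq_one_iff, isRightInversion_simple_iff_isRightDescent]
    have hfar : w⁻¹ * cs.simple i * w ∉ ballWalls cs N := by
      intro hmem
      have hzero := h _ hmem
      rw [show w * (w⁻¹ * cs.simple i * w) * w⁻¹ = cs.simple i by group, hparity] at hzero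
      exact one_ne_zero hzero
    have hrest : ∀ t ∈ ballWalls cs N,
        inversionParity cs (u * cs.simple i) (cs.simple i * w * t * (cs.simple i * w)⁻¹) = 0 := by
      intro t ht
      have hne : cs.simple i ≠ w * t * w⁻¹ := fun heq ↦ hfar (by simpa [heq, mul_assoc] using ht)
      have hsum := inversionParity_mul cs (u * cs.simple i) (cs.simple i) (w * t * w⁻¹)
      rw [simple_mul_simple_cancel_right, h t ht, inversionParity_simple, if_neg hne,
        zero_add] at hsum
      simpa [mul_assoc] using hsum.symm
    have hlen : cs.length (u * cs.simple i) = n := by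
      have := cs.isRightDescent_iff.1 hi
      omega
    have hstep : FarReflection cs N w (cs.simple i * w) :=
      ⟨i, ballAvoidsWall_of_notMem_ballWalls cs hfar, rfl⟩
    simpa [mul_assoc] using (ih _ _ hrest hlen).head hstep

lemma exists_reflTransGen_farReflection_length_le [Finite B] (N : ℕ) :
    ∃ D, ∀ w, ∃ w', cs.length w' ≤ D ∧ ReflTransGen (FarReflection cs N) w w' := by
  have := (finite_ballWalls cs N).to_subtype
  obtain ⟨D, hD⟩ := exists_bounded_representative
    (fun w (t : ballWalls cs N) ↦ inversionParity cs w t) cs.length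
  refine ⟨D, fun w ↦ ?_⟩
  obtain ⟨w', hw', heq⟩ := hD w
  refine ⟨w', hw', ?_⟩
  rw [← inv_mul_cancel_right w' w]
  refine reflTransGen_farReflection_mul cs (w' * w⁻¹) w fun t ht ↦ ?_
  have hsum := inversionParity_mul cs (w' * w⁻¹) w t
  rwa [inv_mul_cancel_right, congrFun heq ⟨t, ht⟩, left_eq_add] at hsum

end WallsAndBalls

/-! ### Buildings -/

namespace IsBuilding

open CoxeterSystem Relation

variable {B W C : Type*} [Group W] {M : CoxeterMatrix B} {cs : CoxeterSystem M W}
  {δ : C → C → W}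

lemma self_eq_one (hb : IsBuilding cs δ) (c : C) : δ c c = 1 := (hb.eq_one_iff c c).2 rfl

lemma symm_of_eq_simple (hb : IsBuilding cs δ) {c d : C} {i : B} (h : δ c d = cs.simple i) :
    δ d c = cs.simple i := by
  obtain ⟨d', hdd', hcd'⟩ := hb.wd3 c d i
  rw [h, simple_mul_simple_self, hb.eq_one_iff] at hcd'
  rwa [hcd']

lemma exists_mul_simple_eq_of_length_eq_succ (hb : IsBuilding cs δ) {c d : C} {n : ℕ}
    (h : cs.length (δ c d) = n + 1) :
    ∃ d' i, δ d' d = cs.simple i ∧ δ c d' * cs.simple i = δ c d ∧ cs.length (δ c d') = n := by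
  obtain ⟨i, hi⟩ := cs.exists_rightDescent_of_ne_one (w := δ c d) fun h1 ↦ by simp [h1] at h
  rw [cs.isRightDescent_iff] at hi
  obtain ⟨d', hdd', hcd'⟩ := hb.wd3 c d i
  exact ⟨d', i, hb.symm_of_eq_simple hdd', by simp [hcd'], by rw [hcd']; omega⟩

lemma eq_simple_mul_of_not_isLeftDescent (hb : IsBuilding cs δ) {x y z : C} {i : B}
    (hxy : δ x y = cs.simple i) (hz : ¬ cs.IsLeftDescent (δ y z) i) :
    δ x z = cs.simple i * δ y z := by
  induction hn : cs.length (δ y z) generalizing z with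
  | zero =>
    rw [length_eq_zero_iff] at hn
    rw [hn, mul_one, ← (hb.eq_one_iff y z).1 hn, hxy]
  | succ n ih =>
    obtain ⟨z', j, hz'z, hyz, hlen⟩ := hb.exists_mul_simple_eq_of_length_eq_succ hn
    rw [cs.not_isLeftDescent_iff, ← hyz, ← mul_assoc] at hz
    have hle := cs.length_mul_le (cs.simple i * δ y z') (cs.simple j)
    rw [length_simple] at hle
    rw [hyz, hn] at hz
    have hz' : ¬ cs.IsLeftDescent (δ y z') i := fun h ↦ by
      have := cs.isLeftDescent_iff.1 h
      omega
    have hxz' := ih hz' hlen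
    have hlen' := cs.not_isLeftDescent_iff.1 hz'
    rw [hb.wd2' x z' z j hz'z (by rw [hxz']; omega), hxz', mul_assoc, hyz]

theorem symm_eq_inv (hb : IsBuilding cs δ) (c d : C) : δ d c = (δ c d)⁻¹ := by
  induction hn : cs.length (δ c d) generalizing d with
  | zero =>
    rw [length_eq_zero_iff] at hn
    rw [hn, inv_one, hb.eq_one_iff, (hb.eq_one_iff c d).1 hn]
  | succ n ih =>
    obtain ⟨d', i, hd'd, hcd, hlen⟩ := hb.exists_mul_simple_eq_of_length_eq_succ hn
    have hdc : cs.simple i * δ d' c = (δ c d)⁻¹ := by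
      rw [ih d' hlen, ← hcd, mul_inv_rev, inv_simple]
    rw [← hdc]
    refine hb.eq_simple_mul_of_not_isLeftDescent (hb.symm_of_eq_simple hd'd) ?_
    rw [cs.not_isLeftDescent_iff, hdc, ih d' hlen, length_inv, length_inv, hn, hlen]

lemma eq_simple_mul_or_eq (hb : IsBuilding cs δ) {x y : C} {i : B} (hxy : δ x y = cs.simple i)
    (z : C) : δ x z = cs.simple i * δ y z ∨ δ x z = δ y z := by
  rw [hb.symm_eq_inv z x, hb.symm_eq_inv z y]
  rcases hb.wd2 z y x i (hb.symm_of_eq_simple hxy) with h | h <;> simp [h]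

lemma exists_eq_simple_mul (hb : IsBuilding cs δ) (y z : C) (i : B) :
    ∃ x, δ x y = cs.simple i ∧ δ x z = cs.simple i * δ y z := by
  obtain ⟨x, hyx, hzx⟩ := hb.wd3 z y i
  refine ⟨x, hb.symm_of_eq_simple hyx, ?_⟩
  rw [hb.symm_eq_inv z x, hzx, hb.symm_eq_inv z y, mul_inv_rev, inv_simple]

theorem length_inv_mul_le (hb : IsBuilding cs δ) (x y z : C) :
    cs.length ((δ x y)⁻¹ * δ x z) ≤ cs.length (δ y z) := by
  induction hn : cs.length (δ y z) generalizing z with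
  | zero =>
    rw [length_eq_zero_iff, hb.eq_one_iff] at hn
    simp [hn]
  | succ n ih =>
    obtain ⟨z', i, hz'z, -, hlen⟩ := hb.exists_mul_simple_eq_of_length_eq_succ hn
    have hz' := ih z' hlen
    rcases hb.wd2 x z' z i hz'z with h | h
    · rw [h, ← mul_assoc]
      have hle := cs.length_mul_le ((δ x y)⁻¹ * δ x z') (cs.simple i)
      rw [length_simple] at hle
      omega
    · rw [h]
      omega

lemma length_triangle (hb : IsBuilding cs δ) (x y z : C) :
    cs.length (δ x z) ≤ cs.length (δ x y) + cs.length (δ y z) := by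
  have hle := cs.length_mul_le (δ x y) ((δ x y)⁻¹ * δ x z)
  rw [mul_inv_cancel_left] at hle
  exact hle.trans (Nat.add_le_add_left (hb.length_inv_mul_le x y z) _)

section Retraction

variable {r : C → C → Prop} {d N : ℕ} {x₀ c₀ : C}

lemma exists_reflected_retraction_of_isLeftDescent (hb : IsBuilding cs δ)
    (hr : ∀ x y, r x y → cs.length (δ x y) ≤ d) {w : W} {i : B}
    (hN : ∀ x, ReflTransGen r x₀ x → cs.length (w⁻¹ * δ c₀ x) ≤ N)
    (hfar : BallAvoidsWall cs (N + d) w i) (hw : cs.IsLeftDescent w i) :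
    ∃ c₁, ∀ x, ReflTransGen r x₀ x → δ c₁ x = cs.simple i * δ c₀ x := by
  obtain ⟨c₁, hadj, hx₀⟩ := hb.exists_eq_simple_mul c₀ x₀ i
  refine ⟨c₁, fun x hx ↦ ?_⟩
  induction hx with
  | refl => exact hx₀
  | @tail x y hx hxy ih =>
    refine (hb.eq_simple_mul_or_eq hadj y).resolve_right fun hstay ↦ ?_
    -- Otherwise both `δ c₀ y` and its mirror image lie near `w`, on the same side of the wall.
    have hnear := hN y (hx.tail hxy)
    have hlip := (hb.length_inv_mul_le c₁ x y).trans (hr x y hxy)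
    have hle := cs.length_mul_le (w⁻¹ * δ c₀ x) ((δ c₁ x)⁻¹ * δ c₁ y)
    have hmirror : w⁻¹ * δ c₀ x * ((δ c₁ x)⁻¹ * δ c₁ y) = w⁻¹ * (cs.simple i * δ c₀ y) := by
      rw [ih, hstay]
      simp [mul_assoc]
    rw [hmirror] at hle
    have hy := (hfar _ (hnear.trans (Nat.le_add_right N d))).2 hw
    have hmirror_y := (hfar _ (hle.trans (Nat.add_le_add (hN x hx) hlip))).2 hw
    exact cs.isLeftDescent_iff_not_isLeftDescent_mul.1 hy hmirror_y

lemma exists_reflected_retraction (hb : IsBuilding cs δ)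
    (hr : ∀ x y, r x y → cs.length (δ x y) ≤ d) {w : W} {i : B}
    (hN : ∀ x, ReflTransGen r x₀ x → cs.length (w⁻¹ * δ c₀ x) ≤ N)
    (hfar : BallAvoidsWall cs (N + d) w i) :
    ∃ c₁, ∀ x, ReflTransGen r x₀ x → δ c₁ x = cs.simple i * δ c₀ x := by
  by_cases hw : cs.IsLeftDescent w i
  · exact hb.exists_reflected_retraction_of_isLeftDescent hr hN hfar hw
  · obtain ⟨c₁, hadj, -⟩ := hb.exists_eq_simple_mul c₀ c₀ i
    refine ⟨c₁, fun x hx ↦ hb.eq_simple_mul_of_not_isLeftDescent hadj ?_⟩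
    rwa [hfar _ ((hN x hx).trans (Nat.le_add_right N d))]

lemma exists_translated_retraction (hb : IsBuilding cs δ)
    (hr : ∀ x y, r x y → cs.length (δ x y) ≤ d) {w w' : W}
    (hN : ∀ x, ReflTransGen r x₀ x → cs.length (w⁻¹ * δ c₀ x) ≤ N)
    (hw : ReflTransGen (FarReflection cs (N + d)) w w') :
    ∃ c₁, ∀ x, ReflTransGen r x₀ x → δ c₁ x = w' * (w⁻¹ * δ c₀ x) := by
  induction hw with
  | refl => exact ⟨c₀, fun x _ ↦ (mul_inv_cancel_left w _).symm⟩
  | @tail v _ _ hstep ih =>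
    obtain ⟨c₁, hc₁⟩ := ih
    obtain ⟨i, hfar, rfl⟩ := hstep
    have hN' : ∀ x, ReflTransGen r x₀ x → cs.length (v⁻¹ * δ c₁ x) ≤ N := fun x hx ↦ by
      rw [hc₁ x hx, inv_mul_cancel_left]
      exact hN x hx
    obtain ⟨c₂, hc₂⟩ := hb.exists_reflected_retraction hr hN' hfar
    exact ⟨c₂, fun x hx ↦ by rw [hc₂ x hx, hc₁ x hx, mul_assoc]⟩

end Retraction

theorem exists_forall_length_le_of_reflTransGen [Finite B] (hb : IsBuilding cs δ) (N d : ℕ) :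
    ∃ K, ∀ (r : C → C → Prop) (c₀ x₀ : C), (∀ x y, r x y → cs.length (δ x y) ≤ d) →
      (∀ x, ReflTransGen r x₀ x → cs.length ((δ c₀ x₀)⁻¹ * δ c₀ x) ≤ N) →
      ∀ x, ReflTransGen r x₀ x → cs.length (δ x₀ x) ≤ K := by
  obtain ⟨D, hD⟩ := exists_reflTransGen_farReflection_length_le cs (N + d)
  refine ⟨D + (D + N), fun r c₀ x₀ hr hN x hx ↦ ?_⟩
  obtain ⟨w', hw', hmoves⟩ := hD (δ c₀ x₀)
  obtain ⟨c₁, hc₁⟩ := hb.exists_translated_retraction hr hN hmoves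
  calc cs.length (δ x₀ x)
      ≤ cs.length (δ c₁ x₀) + cs.length (δ c₁ x) := by
        rw [← cs.length_inv (δ c₁ x₀), ← hb.symm_eq_inv]
        exact hb.length_triangle x₀ c₁ x
    _ = cs.length w' + cs.length (w' * ((δ c₀ x₀)⁻¹ * δ c₀ x)) := by
        rw [hc₁ x₀ .refl, hc₁ x hx, inv_mul_cancel, mul_one]
    _ ≤ cs.length w' + (cs.length w' + cs.length ((δ c₀ x₀)⁻¹ * δ c₀ x)) := by
        gcongr
        exact cs.length_mul_le _ _
    _ ≤ D + (D + N) := by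
        gcongr
        exact hN x hx

theorem asdimLE_of_asdimLE_coxeter [Finite B] [Nonempty C] (hb : IsBuilding cs δ) {n : ℕ}
    (h : AsdimLE (fun u v : W ↦ (cs.length (u⁻¹ * v) : ℝ)) n) :
    AsdimLE (fun c c' : C ↦ (cs.length (δ c c') : ℝ)) n := by
  obtain ⟨c₀⟩ := ‹Nonempty C›
  refine h.of_lipschitz (δ c₀) (fun x y ↦ ?_) (fun x y ↦ ?_) fun R d ↦ ?_
  · rw [hb.symm_eq_inv y x, cs.length_inv]
  · exact_mod_cast hb.length_inv_mul_le c₀ x y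
  · obtain ⟨K, hK⟩ := hb.exists_forall_length_le_of_reflTransGen ⌈R⌉₊ ⌈d⌉₊
    refine ⟨K, fun U hU x hx y hy ↦ ?_⟩
    refine Nat.cast_le.2 (hK _ c₀ x (fun z z' hzz' ↦ ?_) (fun z hz ↦ ?_) y hy)
    · have hlt : (cs.length (δ z z') : ℝ) < d := hzz'.2.2
      exact_mod_cast hlt.le.trans (Nat.le_ceil d)
    · have hzU : δ c₀ z ∈ U := chainComponent_subset hx hz
      exact_mod_cast (hU _ hx _ hzU).trans (Nat.le_ceil R)

section Apartment

/-- The graph of a partially defined isometry from `W` to `C`, ordered by inclusion in the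
construction of apartments by Zorn's lemma. -/
def IsPartialApartment (δ : C → C → W) (G : Set (W × C)) : Prop :=
  ∀ p ∈ G, ∀ q ∈ G, δ p.2 q.2 = p.1⁻¹ * q.1

lemma IsPartialApartment.sUnion {𝒢 : Set (Set (W × C))} (h𝒢 : ∀ G ∈ 𝒢, IsPartialApartment δ G)
    (hchain : IsChain (· ⊆ ·) 𝒢) : IsPartialApartment δ (⋃₀ 𝒢) := by
  rintro p ⟨G, hG, hp⟩ q ⟨G', hG', hq⟩
  rcases hchain.total hG hG' with hsub | hsub
  exacts [h𝒢 G' hG' p (hsub hp) q hq, h𝒢 G hG p hp q (hsub hq)]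

lemma IsPartialApartment.exists_eq_simple_mul (hb : IsBuilding cs δ) {G : Set (W × C)}
    (hG : IsPartialApartment δ G) {w : W} {c : C} (hc : (w, c) ∈ G) (i : B) :
    ∃ x, ∀ p ∈ G, δ x p.2 = cs.simple i * δ c p.2 := by
  by_cases hdescent : ∃ p ∈ G, cs.IsLeftDescent (δ c p.2) i
  · obtain ⟨p, hp, hpi⟩ := hdescent
    obtain ⟨x, hadj, hxp⟩ := hb.exists_eq_simple_mul c p.2 i
    refine ⟨x, fun q hq ↦ (hb.eq_simple_mul_or_eq hadj q.2).resolve_right fun hstay ↦ ?_⟩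
    have hpc : (δ q.2 p.2)⁻¹ * δ q.2 x = (δ c p.2)⁻¹ := by
      rw [hb.symm_eq_inv x q.2, hstay, hG q hq p hp, hG _ hc q hq, hG _ hc p hp]
      group
    have hle := hb.length_inv_mul_le q.2 p.2 x
    rw [hpc, hb.symm_eq_inv x p.2, hxp, length_inv, length_inv] at hle
    exact hle.not_gt hpi
  · push Not at hdescent
    obtain ⟨x, hadj, -⟩ := hb.exists_eq_simple_mul c c i
    exact ⟨x, fun p hp ↦ hb.eq_simple_mul_of_not_isLeftDescent hadj (hdescent p hp)⟩

lemma IsPartialApartment.exists_insert (hb : IsBuilding cs δ) {G : Set (W × C)}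
    (hG : IsPartialApartment δ G) {w : W} {c : C} (hc : (w, c) ∈ G) (i : B) :
    ∃ x, IsPartialApartment δ (insert (w * cs.simple i, x) G) := by
  obtain ⟨x, hx⟩ := hG.exists_eq_simple_mul hb hc i
  have hxG : ∀ p ∈ G, δ x p.2 = (w * cs.simple i)⁻¹ * p.1 := fun p hp ↦ by
    rw [hx p hp, hG _ hc p hp, mul_inv_rev, inv_simple, mul_assoc]
  refine ⟨x, ?_⟩
  rintro p (rfl | hp) q (rfl | hq)
  · rw [hb.self_eq_one, inv_mul_cancel]
  · exact hxG q hq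
  · rw [hb.symm_eq_inv x p.2, hxG p hp, mul_inv_rev, inv_inv]
  · exact hG p hp q hq

theorem exists_apartment [Nonempty C] (hb : IsBuilding cs δ) :
    ∃ f : W → C, ∀ u v, δ (f u) (f v) = u⁻¹ * v := by
  obtain ⟨c₀⟩ := ‹Nonempty C›
  have hsingleton : IsPartialApartment δ {((1 : W), c₀)} := by
    rintro p rfl q rfl
    simp [hb.self_eq_one]
  obtain ⟨G, hc₀, hmax⟩ := zorn_subset_nonempty {G | IsPartialApartment δ G}
    (fun 𝒢 h𝒢 hchain _ ↦ ⟨⋃₀ 𝒢, .sUnion h𝒢 hchain, fun _ ↦ Set.subset_sUnion_of_mem⟩)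
    _ hsingleton
  have htotal : ∀ w, ∃ c, (w, c) ∈ G := by
    intro w
    induction w using cs.simple_induction_right with
    | one => exact ⟨c₀, hc₀ rfl⟩
    | mul_simple_right w i ih =>
      obtain ⟨c, hc⟩ := ih
      obtain ⟨x, hx⟩ := hmax.prop.exists_insert hb hc i
      exact ⟨x, hmax.le_of_ge hx (Set.subset_insert _ _) (Set.mem_insert _ _)⟩
  choose f hf using htotal
  exact ⟨f, fun u v ↦ hmax.prop _ (hf u) _ (hf v)⟩

end Apartment

end IsBuilding

/-- The asymptotic dimension of any building (with the gallery metric) equals the asymptotic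
dimension of its apartment `W` (with the word metric). -/
theorem asdim_building_eq_asdim_coxeter {B W C : Type*} [Finite B] [Group W]
    {M : CoxeterMatrix B} (cs : CoxeterSystem M W) (δC : C → C → W)
    (hb : IsBuilding cs δC) [Nonempty C] :
    asdim (fun c c' : C => (cs.length (δC c c') : ℝ)) =
      asdim (fun u v : W => (cs.length (u⁻¹ * v) : ℝ)) := by
  obtain ⟨f, hf⟩ := hb.exists_apartment
  have hf_isometry (u v : W) : (cs.length (δC (f u) (f v)) : ℝ) = cs.length (u⁻¹ * v) := by
    rw [hf]
  exact asdim_congr fun n ↦ ⟨fun h ↦ h.of_isometry f hf_isometry, hb.asdimLE_of_asdimLE_coxeter⟩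
end
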